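/- arXiv:1803.00965 — 2 statements merged into one kernel-verified Lean document; each statement's English description precedes it below -/
import Mathlib

section
/- Let Λ ∈ GL_n(𝔽₂) and let 1 ≤ n_w ≤ δ−1. If the block submatrix Λ_{(n_w+1,1):(δ,n_w)} is the zero matrix, then for every set D = {v_w} × 𝔽₂^{m(δ−n_w)} in standard form of type (n_w, 0, δ−n_w), the image DΛ also has type (n_w, 0, δ−n_w): its first n_w boxes are white and its remaining δ−n_w boxes are black. -/
open Matrix

/-- The index in `Fin (m * δ)` of the `i`-th coordinate of the `j`-th brick. -/
def brickIdx (m δ : ℕ) (j : Fin δ) (i : Fin m) : Fin (m * δ) :=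
  ⟨m * j.val + i.val, by
    have h1 : m * j.val + i.val < m * (j.val + 1) := by
      rw [Nat.mul_succ]
      exact Nat.add_lt_add_left i.isLt _
    exact lt_of_lt_of_le h1 (Nat.mul_le_mul le_rfl j.isLt)⟩

/-- The projection of a vector on its `j`-th brick. -/
def brickProj (m δ : ℕ) (v : Fin (m * δ) → ZMod 2) (j : Fin δ) : Fin m → ZMod 2 :=
  fun i => v (brickIdx m δ j i)

/-- The `j`-th box of a subset `D`: the projection of `D` on the `j`-th brick. -/
def box (m δ : ℕ) (D : Set (Fin (m * δ) → ZMod 2)) (j : Fin δ) : Set (Fin m → ZMod 2) :=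
  (fun v => brickProj m δ v j) '' D

/-- A box is white if it is a singleton. -/
def IsWhite {α : Type*} (S : Set α) : Prop := ∃ a, S = {a}

/-- A box is black if it is everything. -/
def IsBlack {α : Type*} (S : Set α) : Prop := S = Set.univ

/-- A box is ruled if it is neither white nor black. -/
def IsRuled {α : Type*} (S : Set α) : Prop := ¬ IsWhite S ∧ ¬ IsBlack S

/-- The set `{v_w} × R × 𝔽₂^{m·n_b}` in standard form: the first `nw` bricks are fixed
(equal to `w`), the brick number `nw` (0-indexed) lies in `R` when `nr = 1`, and the
remaining bricks are free. -/
def StdSet (m δ nw nr : ℕ) (w : Fin δ → Fin m → ZMod 2) (R : Set (Fin m → ZMod 2)) :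
    Set (Fin (m * δ) → ZMod 2) :=
  { v | (∀ j : Fin δ, (j : ℕ) < nw → brickProj m δ v j = w j) ∧
        (nr = 1 → ∀ j : Fin δ, (j : ℕ) = nw → brickProj m δ v j ∈ R) }

/-- `D` is in standard form of type `(nw, nr, nb)`. -/
def StdForm (m δ : ℕ) (D : Set (Fin (m * δ) → ZMod 2)) (nw nr nb : ℕ) : Prop :=
  nw + nr + nb = δ ∧ nr ≤ 1 ∧
  ∃ (w : Fin δ → Fin m → ZMod 2) (R : Set (Fin m → ZMod 2)),
    (nr = 1 → 2 ≤ R.ncard ∧ R.ncard ≤ 2 ^ m - 1) ∧ D = StdSet m δ nw nr w R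

/-- `D` has type `(nw, nr, nb)`: its first `nw` boxes are white, the next `nr` boxes are
ruled, and its last `nb` boxes are black. -/
def HasType (m δ : ℕ) (D : Set (Fin (m * δ) → ZMod 2)) (nw nr nb : ℕ) : Prop :=
  nw + nr + nb = δ ∧ nr ≤ 1 ∧
  ∀ j : Fin δ,
    ((j : ℕ) < nw → IsWhite (box m δ D j)) ∧
    (nw ≤ (j : ℕ) → (j : ℕ) < nw + nr → IsRuled (box m δ D j)) ∧
    (nw + nr ≤ (j : ℕ) → IsBlack (box m δ D j))

/-- `D` and `E` have the same type: corresponding boxes have the same kind. -/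
def SameType (m δ : ℕ) (D E : Set (Fin (m * δ) → ZMod 2)) : Prop :=
  ∀ j : Fin δ,
    (IsWhite (box m δ D j) ↔ IsWhite (box m δ E j)) ∧
    (IsBlack (box m δ D j) ↔ IsBlack (box m δ E j))

lemma m_le_mul (m d : ℕ) (h : 1 ≤ d) : m ≤ m * d := by
  calc m = m * 1 := (Nat.mul_one m).symm
  _ ≤ m * d := Nat.mul_le_mul le_rfl h

lemma shift_lt (m δ a : ℕ) (ha : a ≤ δ) (k : ℕ) (hk : k < m * (δ - a)) :
    m * a + k < m * δ := by
  have h := Nat.add_lt_add_left hk (m * a)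
  rwa [← Nat.mul_add, Nat.add_sub_cancel' ha] at h

/-- The index in `Fin (m * δ)` obtained by skipping the first `a` bricks. -/
def shiftIdx (m δ a : ℕ) (ha : a ≤ δ) (k : Fin (m * (δ - a))) : Fin (m * δ) :=
  ⟨m * a + k.val, shift_lt m δ a ha k.val k.isLt⟩

/-- The submatrix `Λ_{(a+1,b+1):(δ,δ)}` (blocks with row brick ≥ a and column brick ≥ b). -/
def subBlock (m δ : ℕ) (Λ : Matrix (Fin (m * δ)) (Fin (m * δ)) (ZMod 2))
    (a b : ℕ) (ha : a ≤ δ) (hb : b ≤ δ) :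
    Matrix (Fin (m * (δ - a))) (Fin (m * (δ - b))) (ZMod 2) :=
  Matrix.of fun r c => Λ (shiftIdx m δ a ha r) (shiftIdx m δ b hb c)

/-- The column of blocks `Λ_{(a+1,j+1):(δ,j+1)}` (row bricks ≥ a, column brick j). -/
def subColBlock (m δ : ℕ) (Λ : Matrix (Fin (m * δ)) (Fin (m * δ)) (ZMod 2))
    (a : ℕ) (ha : a ≤ δ) (j : Fin δ) :
    Matrix (Fin (m * (δ - a))) (Fin m) (ZMod 2) :=
  Matrix.of fun r c => Λ (shiftIdx m δ a ha r) (brickIdx m δ j c)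

/-- The row of blocks `Λ_{(j+1,1):(j+1,c2)}` (row brick j, column bricks < c2). -/
def rowBlock (m δ : ℕ) (Λ : Matrix (Fin (m * δ)) (Fin (m * δ)) (ZMod 2))
    (j : Fin δ) (c2 : ℕ) (hc : c2 ≤ δ) :
    Matrix (Fin m) (Fin (m * c2)) (ZMod 2) :=
  Matrix.of fun i c => Λ (brickIdx m δ j i) (Fin.castLE (Nat.mul_le_mul le_rfl hc) c)

/-- The block `Λ_{j+1, j'+1}`. -/
def block (m δ : ℕ) (Λ : Matrix (Fin (m * δ)) (Fin (m * δ)) (ZMod 2)) (j j' : Fin δ) :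
    Matrix (Fin m) (Fin m) (ZMod 2) :=
  Matrix.of fun i i' => Λ (brickIdx m δ j i) (brickIdx m δ j' i')

/-- The set `R × 𝔽₂^{m (d-1)}` of vectors of `d` bricks whose first brick lies in `R`. -/
def rulDomain (m d : ℕ) (hd : 1 ≤ d) (R : Set (Fin m → ZMod 2)) :
    Set (Fin (m * d) → ZMod 2) :=
  { u | (fun i : Fin m => u (Fin.castLE (m_le_mul m d hd) i)) ∈ R }

/-!
The zero block says that the first coordinates of `vΛ` depend only on the first coordinates of `v`.
An invertible block triangular matrix has a block triangular inverse, so the same holds for `Λ⁻¹`,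
and `v ↦ vΛ` therefore maps the set of all vectors with prescribed first coordinates onto another
set of the same form.
-/

section VecMul

variable {m n R : Type*}

lemma eqOn_vecMul [Fintype m] [NonUnitalNonAssocSemiring R] {s : Set m} {t : Set n}
    {M : Matrix m n R} (hM : ∀ i ∉ s, ∀ j ∈ t, M i j = 0) {u v : m → R} (huv : s.EqOn u v) :
    t.EqOn (u ᵥ* M) (v ᵥ* M) := by
  intro j hj
  simp only [vecMul, dotProduct]
  refine Finset.sum_congr rfl fun i _ => ?_
  by_cases hi : i ∈ s
  · rw [huv hi]
  · rw [hM i hi j hj, mul_zero, mul_zero]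

variable [Fintype n] [DecidableEq n] [CommRing R] {s : Set n} {M : Matrix n n R}

lemma inv_apply_eq_zero_of_notMem_of_mem (hunit : IsUnit M) (hM : ∀ i ∉ s, ∀ j ∈ s, M i j = 0) :
    ∀ i ∉ s, ∀ j ∈ s, M⁻¹ i j = 0 := by
  have := hunit.invertible
  -- In the order on `Prop`, `False < True`: the indices in `s` form the first of two blocks.
  have htri : M.BlockTriangular (· ∉ s) := fun i j hij => by
    obtain ⟨hi, hj⟩ := Classical.not_imp.1 hij.not_ge
    exact hM i hi j (not_not.1 hj)
  exact fun i hi j hj =>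
    blockTriangular_inv_of_blockTriangular htri ⟨fun _ => hi, fun h => h hi hj⟩

lemma image_vecMul_setOf_eqOn (hunit : IsUnit M) (hM : ∀ i ∉ s, ∀ j ∈ s, M i j = 0) (v₀ : n → R) :
    (· ᵥ* M) '' {v | s.EqOn v v₀} = {v | s.EqOn v (v₀ ᵥ* M)} := by
  have hdet : IsUnit M.det := (isUnit_iff_isUnit_det M).1 hunit
  refine Set.Subset.antisymm (Set.image_subset_iff.2 fun v hv => eqOn_vecMul hM hv) fun v hv => ?_
  have hpre : s.EqOn (v ᵥ* M⁻¹) v₀ := by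
    simpa only [vecMul_vecMul, mul_nonsing_inv M hdet, vecMul_one] using
      eqOn_vecMul (inv_apply_eq_zero_of_notMem_of_mem hunit hM) hv
  exact ⟨v ᵥ* M⁻¹, hpre, by simp only [vecMul_vecMul, nonsing_inv_mul M hdet, vecMul_one]⟩

end VecMul

section Bricks

variable {m δ : ℕ}

/-- `brickIdx` as a bijection: a coordinate is the same thing as a brick together with a position
in that brick. -/
def brickEquiv (m δ : ℕ) : Fin δ × Fin m ≃ Fin (m * δ) :=
  finProdFinEquiv.trans (finCongr (Nat.mul_comm δ m))

lemma brickEquiv_apply (j : Fin δ) (i : Fin m) : brickEquiv m δ (j, i) = brickIdx m δ j i :=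
  Fin.ext (Nat.add_comm _ _)

lemma forall_brickIdx {p : Fin (m * δ) → Prop} : (∀ c, p c) ↔ ∀ j i, p (brickIdx m δ j i) := by
  simp only [← (brickEquiv m δ).forall_congr_right, Prod.forall, brickEquiv_apply]

lemma brickIdx_lt_mul_iff {j : Fin δ} {i : Fin m} {k : ℕ} :
    (brickIdx m δ j i : ℕ) < m * k ↔ (j : ℕ) < k := by
  rw [Nat.mul_comm m k, ← Nat.div_lt_iff_lt_mul i.pos, brickIdx, Nat.mul_add_div i.pos,
    Nat.div_eq_of_lt i.isLt, Nat.add_zero]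

/-- The vector with prescribed bricks, inverse to reading off the bricks by `brickProj`. -/
def ofBricks {α : Type*} (w : Fin δ → Fin m → α) : Fin (m * δ) → α :=
  Function.uncurry w ∘ (brickEquiv m δ).symm

lemma ofBricks_brickIdx {α : Type*} (w : Fin δ → Fin m → α) (j : Fin δ) (i : Fin m) :
    ofBricks w (brickIdx m δ j i) = w j i := by
  simp only [ofBricks, ← brickEquiv_apply, Function.comp_apply, Equiv.symm_apply_apply,
    Function.uncurry_apply_pair]

lemma brickProj_ofBricks (w : Fin δ → Fin m → ZMod 2) (j : Fin δ) :
    brickProj m δ (ofBricks w) j = w j :=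
  funext (ofBricks_brickIdx w j)

lemma ofBricks_brickProj (v : Fin (m * δ) → ZMod 2) : ofBricks (brickProj m δ v) = v :=
  funext (forall_brickIdx.2 (ofBricks_brickIdx (brickProj m δ v)))

end Bricks

section StdSet

variable {m δ nw : ℕ} {w : Fin δ → Fin m → ZMod 2} {R : Set (Fin m → ZMod 2)}

lemma mem_stdSet_zero {v : Fin (m * δ) → ZMod 2} :
    v ∈ StdSet m δ nw 0 w R ↔ ∀ j : Fin δ, (j : ℕ) < nw → brickProj m δ v j = w j :=
  and_iff_left fun h => absurd h zero_ne_one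

lemma stdSet_zero_eq_setOf_eqOn :
    StdSet m δ nw 0 w R = {v | Set.EqOn v (ofBricks w) {c | (c : ℕ) < m * nw}} := by
  ext v
  simp only [mem_stdSet_zero, Set.mem_ofPred_eq, Set.EqOn, forall_brickIdx, brickIdx_lt_mul_iff,
    ofBricks_brickIdx, funext_iff, brickProj]
  exact forall_congr' fun _ => forall_comm

lemma box_stdSet_zero_of_lt {j : Fin δ} (hj : (j : ℕ) < nw) :
    box m δ (StdSet m δ nw 0 w R) j = {w j} := by
  refine Set.eq_singleton_iff_unique_mem.2 ⟨⟨ofBricks w, ?_, brickProj_ofBricks w j⟩, ?_⟩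
  · exact mem_stdSet_zero.2 fun i _ => brickProj_ofBricks w i
  · rintro _ ⟨v, hv, rfl⟩
    exact mem_stdSet_zero.1 hv j hj

lemma box_stdSet_zero_of_le {j : Fin δ} (hj : nw ≤ (j : ℕ)) :
    box m δ (StdSet m δ nw 0 w R) j = Set.univ := by
  refine Set.eq_univ_of_forall fun y => ⟨ofBricks (Function.update w j y), ?_, ?_⟩
  · refine mem_stdSet_zero.2 fun i hi => ?_
    have hne : i ≠ j := fun h => (h ▸ hi).not_ge hj
    rw [brickProj_ofBricks, Function.update_of_ne hne]
  · exact (brickProj_ofBricks _ j).trans (Function.update_self j y w)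

lemma hasType_stdSet_zero (hnw : nw ≤ δ) : HasType m δ (StdSet m δ nw 0 w R) nw 0 (δ - nw) :=
  ⟨Nat.add_sub_cancel' hnw, Nat.zero_le 1, fun j =>
    ⟨fun hj => ⟨w j, box_stdSet_zero_of_lt hj⟩, fun hle hlt => absurd hlt hle.not_gt,
      box_stdSet_zero_of_le⟩⟩

lemma image_vecMul_stdSet_zero {Λ : Matrix (Fin (m * δ)) (Fin (m * δ)) (ZMod 2)} (hΛ : IsUnit Λ)
    (hzero : ∀ r c : Fin (m * δ), m * nw ≤ (r : ℕ) → (c : ℕ) < m * nw → Λ r c = 0) :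
    (· ᵥ* Λ) '' StdSet m δ nw 0 w R =
      StdSet m δ nw 0 (brickProj m δ (ofBricks w ᵥ* Λ)) R := by
  rw [stdSet_zero_eq_setOf_eqOn, stdSet_zero_eq_setOf_eqOn, ofBricks_brickProj]
  exact image_vecMul_setOf_eqOn hΛ (fun r hr c hc => hzero r c (not_lt.1 hr) hc) _

end StdSet

/-- **Lemma: sufficiency, non-ruled case.** If the block submatrix
`Λ_{(n_w+1,1):(δ,n_w)}` is zero, then for every `D = {v_w} × 𝔽₂^{m(δ-n_w)}` in standard
form of type `(n_w, 0, δ-n_w)`, the image `DΛ` also has type `(n_w, 0, δ-n_w)`. -/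
theorem stmt_5 (m δ : ℕ) (hm : 2 ≤ m) (hδ : 2 ≤ δ)
    (Λ : Matrix (Fin (m * δ)) (Fin (m * δ)) (ZMod 2)) (hΛ : IsUnit Λ)
    (nw : ℕ) (hnw1 : 1 ≤ nw) (hnw2 : nw ≤ δ - 1)
    (hzero : ∀ r c : Fin (m * δ), m * nw ≤ (r : ℕ) → (c : ℕ) < m * nw → Λ r c = 0) :
    ∀ w : Fin δ → Fin m → ZMod 2,
      HasType m δ ((fun v => Matrix.vecMul v Λ) '' StdSet m δ nw 0 w ∅)
        nw 0 (δ - nw) := by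
  intro w
  rw [image_vecMul_stdSet_zero hΛ hzero]
  exact hasType_stdSet_zero (hnw2.trans (Nat.sub_le δ 1))
end

section
/- Let t be a positive even integer, δ = 2^t, c = 2^{t/2}, m > 1, q = 2^m, and let M ∈ GL_c(𝔽_q) be an MDS matrix (every square submatrix of M is invertible). Let Λ ∈ GL_δ(𝔽_q) be the δ × δ matrix over 𝔽_q given in c × c block form (each block of size c × c) whose (i,j)-block equals 𝕀_{((i−j) mod c)+1} · Mᵀ, where 𝕀_ℓ denotes the c × c matrix with the entry 1 in position (ℓ,ℓ) and 0 elsewhere (this is the AES-like mixing layer ShiftRowsᵀ · MixColumnsᵀ). Then Λ is non-type-preserving: there exists a subset D ⊆ (𝔽_q)^δ in standard form of non-trivial type such that the type of DΛ differs from the type of D. -/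
/-!
If `Λ` has a nonzero entry at `(r, s)` with `s < r`, then it moves the subspace
`D = {v | v_j = 0 for j < r}`, of type `(r, 0, δ - r)`, to a set whose `s`-th box contains both `0`
and `Λ r s`, whereas the `s`-th box of `D` is white. So a type-preserving matrix is upper
triangular. The mixing layer is not: for `ℓ ≠ 0` its block `(ℓ, 0)` lies strictly below the
diagonal, and the only nonzero row of that block is the `ℓ`-th column of `M`. The entries
of an MDS matrix are nonzero because they are its `1 × 1` minors.
-/

/-- The `j`-th box of `D ⊆ F^δ`: the projection of `D` on the `j`-th coordinate. -/
def boxQ {F : Type*} (δ : ℕ) (D : Set (Fin δ → F)) (j : Fin δ) : Set F :=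
  (fun v => v j) '' D

/-- The set `{v_w} × R × F^{n_b}` in standard form: the first `nw` coordinates are fixed
(equal to `w`), coordinate number `nw` (0-indexed) lies in `R` when `nr = 1`, and the
remaining coordinates are free. -/
def StdSetQ {F : Type*} (δ nw nr : ℕ) (w : Fin δ → F) (R : Set F) : Set (Fin δ → F) :=
  { v | (∀ j : Fin δ, (j : ℕ) < nw → v j = w j) ∧
        (nr = 1 → ∀ j : Fin δ, (j : ℕ) = nw → v j ∈ R) }

/-- `D` is in standard form of type `(nw, nr, nb)`. -/
def StdFormQ {F : Type*} [Fintype F] (δ : ℕ) (D : Set (Fin δ → F)) (nw nr nb : ℕ) : Prop :=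
  nw + nr + nb = δ ∧ nr ≤ 1 ∧
  ∃ (w : Fin δ → F) (R : Set F),
    (nr = 1 → 2 ≤ R.ncard ∧ R.ncard ≤ Fintype.card F - 1) ∧ D = StdSetQ δ nw nr w R

/-- `D` and `E` have the same type: corresponding boxes have the same kind. -/
def SameTypeQ {F : Type*} (δ : ℕ) (D E : Set (Fin δ → F)) : Prop :=
  ∀ j : Fin δ,
    (IsWhite (boxQ δ D j) ↔ IsWhite (boxQ δ E j)) ∧
    (IsBlack (boxQ δ D j) ↔ IsBlack (boxQ δ E j))

/-- A matrix over `F` is non-type-preserving if it changes the type of some set in standard form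
of non-trivial type. -/
def NonTypePreserving {F : Type*} [NonUnitalNonAssocSemiring F] [Fintype F] {δ : ℕ}
    (Λ : Matrix (Fin δ) (Fin δ) F) : Prop :=
  ∃ (D : Set (Fin δ → F)) (nw nr nb : ℕ),
    StdFormQ δ D nw nr nb ∧ nw ≠ δ ∧ nb ≠ δ ∧
    ¬ SameTypeQ δ D ((fun v => Matrix.vecMul v Λ) '' D)

/-- The AES-like mixing layer of `M`, whose `(i, j)`-block is `𝕀_{i - j} · Mᵀ`. Blocks and positions
inside a block are indexed by `Fin c`, so that `i - j` is the difference modulo `c`. -/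
def mixingLayer {F : Type*} [NonAssocSemiring F] {c : ℕ} (M : Matrix (Fin c) (Fin c) F) :
    Matrix (Fin (c * c)) (Fin (c * c)) F :=
  Matrix.reindex finProdFinEquiv finProdFinEquiv <|
    Matrix.comp _ _ _ _ F <| .of fun i j => Matrix.single (i - j) (i - j) 1 * M.transpose

lemma apply_default_ne_zero_of_isUnit {n R : Type*} [Unique n] [DecidableEq n] [Semiring R]
    [Nontrivial R] {A : Matrix n n R} (hA : IsUnit A) : A default default ≠ 0 := by
  contrapose! hA
  rw [show A = 0 from Matrix.ext fun i j => by
    rw [Unique.eq_default i, Unique.eq_default j, hA, Matrix.zero_apply]]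
  exact not_isUnit_zero

section StandardForm

variable {F : Type*} {δ nw nr : ℕ} {w : Fin δ → F} {R : Set F}

lemma IsWhite.subsingleton {α : Type*} {S : Set α} (hS : IsWhite S) : S.Subsingleton := by
  obtain ⟨a, rfl⟩ := hS
  exact Set.subsingleton_singleton

lemma isWhite_boxQ_stdSetQ (hD : (StdSetQ δ nw nr w R).Nonempty) {j : Fin δ} (hj : (j : ℕ) < nw) :
    IsWhite (boxQ δ (StdSetQ δ nw nr w R) j) :=
  ⟨w j, Set.eq_singleton_iff_nonempty_unique_mem.2
    ⟨hD.image _, Set.forall_mem_image.2 fun _ hv => hv.1 j hj⟩⟩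

lemma mem_stdSetQ_zero {v : Fin δ → F} :
    v ∈ StdSetQ δ nw 0 w R ↔ ∀ j : Fin δ, (j : ℕ) < nw → v j = w j := by
  simp [StdSetQ]

lemma stdFormQ_stdSetQ_zero [Fintype F] (hnw : nw ≤ δ) :
    StdFormQ δ (StdSetQ δ nw 0 w R) nw 0 (δ - nw) :=
  ⟨by omega, zero_le_one, w, R, by simp, rfl⟩

end StandardForm

theorem nonTypePreserving_of_ne_zero_of_lt {F : Type*} [NonAssocSemiring F] [Fintype F] {δ : ℕ}
    {Λ : Matrix (Fin δ) (Fin δ) F} {r s : Fin δ} (hsr : s < r) (hΛ : Λ r s ≠ 0) :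
    NonTypePreserving Λ := by
  set D : Set (Fin δ → F) := StdSetQ δ r 0 0 ∅
  have zero_mem : 0 ∈ D := mem_stdSetQ_zero.2 fun _ _ => rfl
  have single_mem : Pi.single r 1 ∈ D :=
    mem_stdSetQ_zero.2 fun j hj => Pi.single_eq_of_ne (Fin.ne_of_lt hj) 1
  refine ⟨D, r, 0, δ - r, stdFormQ_stdSetQ_zero r.isLt.le, by omega, by omega, fun hsame => hΛ ?_⟩
  have hwhite : IsWhite (boxQ δ ((fun v => Matrix.vecMul v Λ) '' D) s) :=
    (hsame s).1.1 (isWhite_boxQ_stdSetQ ⟨0, zero_mem⟩ hsr)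
  have heq : Matrix.vecMul (Pi.single r 1) Λ s = Matrix.vecMul 0 Λ s :=
    hwhite.subsingleton ⟨_, ⟨_, single_mem, rfl⟩, rfl⟩ ⟨_, ⟨_, zero_mem, rfl⟩, rfl⟩
  rwa [Matrix.single_one_vecMul, Matrix.zero_vecMul] at heq

section MixingLayer

variable {F : Type*} [NonAssocSemiring F] {c : ℕ} (M : Matrix (Fin c) (Fin c) F)

lemma mixingLayer_apply_finProdFinEquiv (i j k l : Fin c) :
    mixingLayer M (finProdFinEquiv (i, k)) (finProdFinEquiv (j, l)) =
      if k = i - j then M l (i - j) else 0 := by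
  simp only [mixingLayer, Matrix.reindex_apply, Matrix.submatrix_apply, Equiv.symm_apply_apply,
    Matrix.comp_apply, Matrix.of_apply]
  split_ifs with h
  · rw [h, Matrix.single_mul_apply_same, one_mul, Matrix.transpose_apply]
  · exact Matrix.single_mul_apply_of_ne _ _ _ _ _ h _

lemma mixingLayer_apply (hc : 0 < c) (r s : Fin (c * c)) :
    mixingLayer M r s =
      if (r : ℕ) % c = ((r : ℕ) / c + c - (s : ℕ) / c) % c then
        M ⟨(s : ℕ) % c, Nat.mod_lt _ hc⟩
          ⟨((r : ℕ) / c + c - (s : ℕ) / c) % c, Nat.mod_lt _ hc⟩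
      else 0 := by
  have hsub : r.divNat - s.divNat =
      ⟨((r : ℕ) / c + c - (s : ℕ) / c) % c, Nat.mod_lt _ hc⟩ := by
    have hs : (s : ℕ) / c < c := s.divNat.isLt
    ext
    rw [Fin.val_sub, Fin.coe_divNat, Fin.coe_divNat, Nat.add_sub_assoc hs.le, Nat.add_comm]
  calc mixingLayer M r s
      = mixingLayer M (finProdFinEquiv (r.divNat, r.modNat))
          (finProdFinEquiv (s.divNat, s.modNat)) := by
        congr 1 <;> exact (finProdFinEquiv.apply_symm_apply _).symm
    _ = _ := by
        rw [mixingLayer_apply_finProdFinEquiv, hsub]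
        simp only [Fin.ext_iff, Fin.coe_modNat]
        rfl

end MixingLayer

theorem stmt_15_general {F : Type*} [NonAssocSemiring F] [Fintype F] {c : ℕ}
    {M : Matrix (Fin c) (Fin c) F} {a ℓ : Fin c} (hℓ : 0 < (ℓ : ℕ)) (hM : M a ℓ ≠ 0) :
    NonTypePreserving (mixingLayer M) := by
  have : NeZero c := ⟨a.pos.ne'⟩
  have below_diagonal : finProdFinEquiv ((0 : Fin c), a) < finProdFinEquiv (ℓ, ℓ) := by
    rw [Fin.lt_def, finProdFinEquiv_apply_val, finProdFinEquiv_apply_val]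
    calc (a : ℕ) + c * (0 : Fin c) = a := by simp
      _ < c := a.isLt
      _ ≤ c * ℓ := Nat.le_mul_of_pos_right c hℓ
      _ ≤ ℓ + c * ℓ := Nat.le_add_left _ _
  exact nonTypePreserving_of_ne_zero_of_lt below_diagonal
    (by simpa [mixingLayer_apply_finProdFinEquiv] using hM)

/-- **AES-like mixing layer.** Let `t` be a positive even integer,
`δ = 2^t`, `c = 2^{t/2}`, `q = 2^m` with `m > 1`, and let `M ∈ GL_c(𝔽_q)` be MDS.  Let
`Λ` be the `δ × δ` matrix over `𝔽_q` whose `(i,j)`-block (in `c × c` block form) is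
`𝕀_{((i-j) mod c)+1} · Mᵀ`; entrywise (0-indexed), `Λ_{r,s} = M_{s mod c, ℓ}` if
`r mod c = ℓ`, and `0` otherwise, where `ℓ = (r/c - s/c) mod c`.  Then `Λ` is
non-type-preserving: some subset `D ⊆ (𝔽_q)^δ` in standard form of non-trivial type has
`type(DΛ) ≠ type(D)`. -/
theorem stmt_15 (m : ℕ) (hm : 1 < m) (F : Type) [Field F] [Fintype F]
    (hF : Fintype.card F = 2 ^ m)
    (t : ℕ) (ht : 0 < t) (heven : Even t)
    (c δ : ℕ) (hc : c = 2 ^ (t / 2)) (hδ : δ = 2 ^ t)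
    (hcpos : 0 < c)
    (M : Matrix (Fin c) (Fin c) F)
    (hMDS : ∀ (k : ℕ) (r cc : Fin k → Fin c), Function.Injective r → Function.Injective cc →
      IsUnit (M.submatrix r cc))
    (Λ : Matrix (Fin δ) (Fin δ) F)
    (hΛ : ∀ r s : Fin δ,
      Λ r s =
        if (r : ℕ) % c = ((r : ℕ) / c + c - (s : ℕ) / c) % c then
          M ⟨(s : ℕ) % c, Nat.mod_lt _ hcpos⟩
            ⟨((r : ℕ) / c + c - (s : ℕ) / c) % c, Nat.mod_lt _ hcpos⟩
        else 0) :
    ∃ (D : Set (Fin δ → F)) (nw nr nb : ℕ),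
      StdFormQ δ D nw nr nb ∧ nw ≠ δ ∧ nb ≠ δ ∧
      ¬ SameTypeQ δ D ((fun v => Matrix.vecMul v Λ) '' D) := by
  obtain ⟨k, rfl⟩ := heven
  have hck : c = 2 ^ k := by rw [hc, ← two_mul, Nat.mul_div_cancel_left k two_pos]
  have one_lt_c : 1 < c := hck ▸ Nat.one_lt_two_pow (by omega)
  obtain rfl : δ = c * c := by rw [hδ, hck, pow_add]
  obtain rfl : Λ = mixingLayer M := by
    ext r s
    rw [hΛ, mixingLayer_apply M hcpos]
  have entry_ne_zero : M ⟨0, hcpos⟩ ⟨1, one_lt_c⟩ ≠ 0 :=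
    apply_default_ne_zero_of_isUnit (hMDS 1 (fun _ => _) (fun _ => _)
      (Function.injective_of_subsingleton _) (Function.injective_of_subsingleton _))
  exact stmt_15_general one_pos entry_ne_zero
end
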